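/- Let L ≥ 5 be an integer, λ > 0 a real number, and m₀ ∈ {3, …, L−2}. Let x* be the largest zero of the function t ↦ F(L, t, 1/λ, (2m₀ − L − 1)/(L − 3)) (i.e., F vanishes at x* and does not vanish at any t > x*). Then the largest eigenvalue of the real symmetric matrix Π^{ph}_{e_{m₀}} − λΠ equals λ(cosh(x*) − 1)/2. -/

import Mathlib

open Matrix

/-- `μ` is the largest (real) eigenvalue of the matrix `A`. -/
def IsMaxEigenvalue {n : ℕ} (A : Matrix (Fin n) (Fin n) ℝ) (μ : ℝ) : Prop :=
  (∃ v : Fin n → ℝ, v ≠ 0 ∧ A.mulVec v = μ • v) ∧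
  ∀ μ' : ℝ, (∃ v : Fin n → ℝ, v ≠ 0 ∧ A.mulVec v = μ' • v) → μ' ≤ μ

/-- The `L × L` matrix `Π` (1-based indices translated to `Fin L`). -/
noncomputable def PiMat (L : ℕ) : Matrix (Fin L) (Fin L) ℝ :=
  Matrix.of fun i j =>
    if (i : ℕ) = (j : ℕ) then 1/2
    else if ((i : ℕ) + 1 = (j : ℕ) ∧ ((i : ℕ) = 0 ∨ (i : ℕ) = L - 2)) ∨
            ((j : ℕ) + 1 = (i : ℕ) ∧ ((j : ℕ) = 0 ∨ (j : ℕ) = L - 2)) then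
      -1/(2*Real.sqrt 2)
    else if (i : ℕ) + 1 = (j : ℕ) ∨ (j : ℕ) + 1 = (i : ℕ) then -1/4
    else 0

/-- The diagonal matrix `Π^{ph}_a` (1-based indices translated to `Fin L`). -/
noncomputable def PiPh (L : ℕ) (a : Fin L → ℝ) : Matrix (Fin L) (Fin L) ℝ :=
  Matrix.diagonal fun i =>
    let a' : ℕ → ℝ := fun k => if h : k < L then a ⟨k, h⟩ else 0
    if (i : ℕ) = 0 then a' 1
    else if (i : ℕ) = L - 1 then a' (L - 2)
    else (a' ((i : ℕ) - 1) + a' ((i : ℕ) + 1)) / 2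

/-- The standard basis vector `e_m` (as a `{0,1}`-valued string). -/
def eVec (L : ℕ) (m : Fin L) : Fin L → ℝ := fun i => if i = m then 1 else 0

/-- The function `F(L,x,w,y)` from the paper. -/
noncomputable def Ffun (L : ℕ) (x w y : ℝ) : ℝ :=
  (1/2)*Real.cosh ((L:ℝ)*x) - 2*w*Real.cosh (((L:ℝ)-1)*x)
    + (2*w^2 - 1/2)*Real.cosh (((L:ℝ)-2)*x) + 2*w^2*Real.cosh (((L:ℝ)-4)*x)
    + 2*w*(2*w*Real.cosh x - Real.cosh (2*x))*Real.cosh (((L:ℝ)-3)*x*y)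

/-! `2Π` is the symmetric normalized Laplacian of the path graph on `L` vertices, and `Π^{ph}_a` is
the diagonal matrix `D⁻¹ (A a)`, where `A` and `D` are the adjacency and degree matrices of the
path. Writing an eigenvector as `D^{1/2} f` therefore turns the eigenvalue equation of
`Π^{ph}_a - λ Π` at `λ (c - 1) / 2` into the discrete Schrödinger equation
`A f + (2 / λ) (A a) f = c D f`. Its solutions are determined by their value at the left end, so
`λ (c - 1) / 2` is an eigenvalue exactly when that solution meets the boundary condition at the
right end. For `a = e_m` the potential is supported on the two neighbours of `m`, and Duhamel's
formula expresses the solution through Chebyshev polynomials; at `c = cosh x` the boundary condition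
becomes `F(L, x, 1/λ, (2m - L - 1)/(L - 3)) = 0`. Every nonnegative real is of the form
`λ (cosh x - 1) / 2` with `0 ≤ x`, and this is increasing in `x`, so the largest zero gives the
largest eigenvalue. -/

section NormalizedLaplacian

variable {V : Type*} [Fintype V] [DecidableEq V] (G : SimpleGraph V) [DecidableRel G.Adj]

/-- The symmetric normalized Laplacian `1 - D^{-1/2} A D^{-1/2}` of a graph with adjacency matrix
`A` and degree matrix `D`. Division by zero gives isolated vertices the diagonal entry `1`. -/
noncomputable def normalizedLapMatrix : Matrix V V ℝ :=
  1 - Matrix.of fun i j => G.adjMatrix ℝ i j / (√(G.degree i) * √(G.degree j))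

variable {G}

lemma normalizedLapMatrix_mulVec_sqrt_degree_mul (hG : ∀ i, 0 < G.degree i) (f : V → ℝ) (i : V) :
    (normalizedLapMatrix G *ᵥ fun j => √(G.degree j) * f j) i
      = √(G.degree i) * (f i - (G.adjMatrix ℝ *ᵥ f) i / G.degree i) := by
  have hpos (j : V) : (0 : ℝ) < G.degree j := by exact_mod_cast hG j
  have hsum : ∑ j, G.adjMatrix ℝ i j / (√(G.degree i) * √(G.degree j)) * (√(G.degree j) * f j)
      = (√(G.degree i))⁻¹ * ∑ j, G.adjMatrix ℝ i j * f j := by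
    rw [Finset.mul_sum]
    refine Finset.sum_congr rfl fun j _ => ?_
    have := (Real.sqrt_pos.2 (hpos j)).ne'
    field_simp
  have hinv : (√(G.degree i))⁻¹ = √(G.degree i) / G.degree i := by
    rw [Real.sqrt_div_self', one_div]
  rw [normalizedLapMatrix, sub_mulVec, one_mulVec, Pi.sub_apply]
  simp only [mulVec, dotProduct, of_apply, hsum, hinv]
  ring

lemma diagonal_sub_smul_normalizedLapMatrix_mulVec_eq_iff (hG : ∀ i, 0 < G.degree i) {lam : ℝ}
    (hlam : lam ≠ 0) (c : ℝ) (d f : V → ℝ) :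
    (diagonal d - lam • (1 / 2 : ℝ) • normalizedLapMatrix G) *ᵥ (fun j => √(G.degree j) * f j)
        = (lam * (c - 1) / 2) • (fun j => √(G.degree j) * f j) ↔
      ∀ i, (G.adjMatrix ℝ *ᵥ f) i + 2 / lam * (G.degree i * d i) * f i
        = c * G.degree i * f i := by
  rw [funext_iff]
  refine forall_congr' fun i => ?_
  have hdeg : (0 : ℝ) < G.degree i := by exact_mod_cast hG i
  simp only [sub_mulVec, smul_mulVec, Pi.sub_apply, Pi.smul_apply, smul_eq_mul, mulVec_diagonal,
    normalizedLapMatrix_mulVec_sqrt_degree_mul hG]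
  set w := √(G.degree i)
  set Af := (G.adjMatrix ℝ *ᵥ f) i
  have hscale : w * lam / (2 * G.degree i) ≠ 0 := by positivity
  have hdiff : d i * (w * f i) - lam * (1 / 2 * (w * (f i - Af / G.degree i)))
        - lam * (c - 1) / 2 * (w * f i)
      = w * lam / (2 * G.degree i)
        * (Af + 2 / lam * (G.degree i * d i) * f i - c * G.degree i * f i) := by
    field_simp
    ring
  rw [← sub_eq_zero, hdiff, mul_eq_zero_iff_left hscale, sub_eq_zero]

lemma exists_eigenvector_diagonal_sub_smul_normalizedLapMatrix_iff (hG : ∀ i, 0 < G.degree i)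
    {lam : ℝ} (hlam : lam ≠ 0) (c : ℝ) (d : V → ℝ) :
    (∃ v, v ≠ 0 ∧ (diagonal d - lam • (1 / 2 : ℝ) • normalizedLapMatrix G) *ᵥ v
        = (lam * (c - 1) / 2) • v) ↔
      ∃ f : V → ℝ, f ≠ 0 ∧ ∀ i, (G.adjMatrix ℝ *ᵥ f) i + 2 / lam * (G.degree i * d i) * f i
        = c * G.degree i * f i := by
  have hsqrt (i : V) : √(G.degree i) ≠ 0 := (Real.sqrt_pos.2 (by exact_mod_cast hG i)).ne'
  have hsurj : Function.Surjective fun (f : V → ℝ) j => √(G.degree j) * f j := fun v =>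
    ⟨fun j => v j / √(G.degree j), funext fun j => mul_div_cancel₀ _ (hsqrt j)⟩
  rw [hsurj.exists]
  refine exists_congr fun f => and_congr (not_congr ?_)
    (diagonal_sub_smul_normalizedLapMatrix_mulVec_eq_iff hG hlam c d f)
  simp [funext_iff, hsqrt]

end NormalizedLaplacian

section PathGraph

open SimpleGraph

instance (n : ℕ) : DecidableRel (pathGraph n).Adj := fun _ _ =>
  decidable_of_iff' _ pathGraph_adj

lemma pathGraph_adjMatrix_mulVec_apply {R : Type*} [NonAssocSemiring R] {n : ℕ} (f : ℕ → R)
    (i : Fin n) :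
    ((pathGraph n).adjMatrix R *ᵥ fun j => f j) i
      = (if (i : ℕ) = 0 then 0 else f (i - 1)) + if (i : ℕ) + 1 = n then 0 else f (i + 1) := by
  have hrow (j : ℕ) : (if (i : ℕ) + 1 = j ∨ j + 1 = i then f j else 0)
      = (if j = (i : ℕ) - 1 then if (i : ℕ) = 0 then 0 else f (i - 1) else 0)
        + if j = (i : ℕ) + 1 then f (i + 1) else 0 := by
    grind
  have hi := i.isLt
  simp only [mulVec, dotProduct, adjMatrix_apply, pathGraph_adj, ite_mul, one_mul, zero_mul]
  rw [Fin.sum_univ_eq_sum_range (fun j => if (i : ℕ) + 1 = j ∨ j + 1 = i then f j else 0) n]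
  simp only [hrow, Finset.sum_add_distrib, Finset.sum_ite_eq', Finset.mem_range]
  grind

lemma pathGraph_adjMatrix_mulVec_single {R : Type*} [NonAssocSemiring R] {n p : ℕ}
    (hp : p + 1 < n) (a : R) (i : Fin n) :
    ((pathGraph n).adjMatrix R *ᵥ fun j => (Pi.single (p + 1) a : ℕ → R) j) i
      = (Pi.single p a + Pi.single (p + 2) a : ℕ → R) i := by
  rw [pathGraph_adjMatrix_mulVec_apply]
  simp only [Pi.single_apply, Pi.add_apply]
  grind

lemma degree_pathGraph {n : ℕ} (hn : 2 ≤ n) (i : Fin n) :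
    (pathGraph n).degree i = if (i : ℕ) = 0 ∨ (i : ℕ) + 1 = n then 1 else 2 := by
  have h := adjMatrix_mulVec_const_apply (G := pathGraph n) (a := 1) (v := i) (α := ℕ)
  have h' := pathGraph_adjMatrix_mulVec_apply (fun _ => 1) i
  rw [mul_one, Nat.cast_id] at h
  rw [← h]
  refine h'.trans ?_
  grind

lemma degree_pathGraph_pos {n : ℕ} (hn : 2 ≤ n) (i : Fin n) : 0 < (pathGraph n).degree i := by
  rw [degree_pathGraph hn]
  split_ifs <;> norm_num

lemma PiPh_eq_diagonal {L : ℕ} (hL : 2 ≤ L) (a : ℕ → ℝ) :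
    PiPh L (fun i => a i)
      = diagonal fun i => ((pathGraph L).adjMatrix ℝ *ᵥ fun j => a j) i
          / (pathGraph L).degree i := by
  rw [PiPh]
  congr! 2 with i
  rw [pathGraph_adjMatrix_mulVec_apply, degree_pathGraph hL]
  rcases i with ⟨i, hi⟩
  rcases Nat.eq_zero_or_pos i with rfl | hpos
  · simp [show 1 < L by omega, show 1 ≠ L by omega]
  rcases Nat.lt_or_eq_of_le (Nat.succ_le_of_lt hi) with hlt | rfl
  · simp [hpos.ne', hlt.ne, show i ≠ L - 1 by omega, show i - 1 < L by omega, hlt]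
  · simp [hpos.ne']

lemma PiMat_eq_half_smul_normalizedLapMatrix {L : ℕ} (hL : 3 ≤ L) :
    PiMat L = (1 / 2 : ℝ) • normalizedLapMatrix (pathGraph L) := by
  ext i j
  have hsq : √(2 : ℝ) * √2 = 2 := Real.mul_self_sqrt zero_le_two
  simp only [PiMat, normalizedLapMatrix, of_apply, Matrix.smul_apply, Matrix.sub_apply, one_apply,
    adjMatrix_apply, pathGraph_adj, degree_pathGraph (show 2 ≤ L by omega), Fin.ext_iff,
    smul_eq_mul, Nat.cast_ite, Nat.cast_one, Nat.cast_ofNat, apply_ite (Real.sqrt), Real.sqrt_one]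
  by_cases hdiag : (i : ℕ) = j
  · simp [hdiag]
  by_cases hadj : (i : ℕ) + 1 = j ∨ (j : ℕ) + 1 = i
  · simp only [hdiag, hadj, if_true, if_false]
    split_ifs <;> first | omega | grind
  · grind

end PathGraph

section PathSolution

open Polynomial Polynomial.Chebyshev SimpleGraph

variable {R : Type*} [CommRing R]

/-- The solution of `f k + f (k + 2) + V (k + 1) * f (k + 1) = 2 * c * f (k + 1)` started at the
left end of a path by `f 0 = 1` and `f 1 + V 0 * f 0 = c * f 0`. -/
def pathSolution (V : ℕ → R) (c : R) : ℕ → R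
  | 0 => 1
  | 1 => c - V 0
  | k + 2 => (2 * c - V (k + 1)) * pathSolution V c (k + 1) - pathSolution V c k

-- Discrete Duhamel formula: `U (m - 1)` is the response to a unit source `m` steps back.
lemma pathSolution_eq_sub_sum (V : ℕ → R) (c : R) (n : ℕ) :
    pathSolution V c n = (T R n).eval c
      - ∑ k ∈ Finset.range n, V k * pathSolution V c k * (U R (n - 1 - k)).eval c := by
  induction n using Nat.twoStepInduction with
  | zero => simp [pathSolution]
  | one => simp [pathSolution]
  | more n ih₀ ih₁ =>
    have hT : (T R (n + 2 : ℕ)).eval c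
        = 2 * c * (T R (n + 1 : ℕ)).eval c - (T R n).eval c := by
      simp [T_add_two]
    let g (m k : ℕ) : R := V k * pathSolution V c k * (U R (m - 1 - k)).eval c
    have hg_last (m : ℕ) : g m m = 0 := by simp [g]
    have hg_succ (m : ℕ) : g (m + 1) m = V m * pathSolution V c m := by simp [g]
    have hg_rec (k : ℕ) : g (n + 2) k = 2 * c * g (n + 1) k - g n k := by
      have hU := congrArg (eval c) (U_add_two R (n - 1 - k))
      rw [show (n - 1 - k + 2 : ℤ) = (n + 2 : ℕ) - 1 - k by push_cast; ring,
        show (n - 1 - k + 1 : ℤ) = (n + 1 : ℕ) - 1 - k by push_cast; ring] at hU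
      simp only [g, hU, eval_sub, eval_mul, eval_ofNat, eval_X]
      ring
    have hsum : ∑ k ∈ Finset.range (n + 2), g (n + 2) k
        = 2 * c * ∑ k ∈ Finset.range (n + 1), g (n + 1) k - ∑ k ∈ Finset.range n, g n k
          + V (n + 1) * pathSolution V c (n + 1) := by
      rw [Finset.sum_range_succ, hg_succ, Finset.sum_congr rfl fun k _ => hg_rec k,
        Finset.sum_sub_distrib, ← Finset.mul_sum, Finset.sum_range_succ (g n), hg_last, add_zero]
    rw [pathSolution]
    linear_combination 2 * c * ih₁ - ih₀ - hT + hsum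

lemma pathSolution_eq_T_of_forall_lt {V : ℕ → R} {n : ℕ} (hV : ∀ k < n, V k = 0) (c : R) :
    pathSolution V c n = (T R n).eval c := by
  rw [pathSolution_eq_sub_sum, Finset.sum_eq_zero fun k hk => by
    rw [hV k (Finset.mem_range.1 hk), zero_mul, zero_mul], sub_zero]

lemma pathSolution_succ_sub_mul (V : ℕ → R) (c : R) (n : ℕ) :
    pathSolution V c (n + 1) - c * pathSolution V c n
      = (T R (n + 1)).eval c - c * (T R n).eval c
        - ∑ k ∈ Finset.range (n + 1), V k * pathSolution V c k * (T R (n - k)).eval c := by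
  have hU (k : ℕ) : (U R ((n + 1 : ℕ) - 1 - k)).eval c
      = c * (U R (n - 1 - k)).eval c + (T R (n - k)).eval c := by
    have h := congrArg (eval c) (U_eq_X_mul_U_add_T R (n - 1 - k))
    rw [show (n - 1 - k + 1 : ℤ) = n - k by ring] at h
    simpa using h
  have hsum : ∑ k ∈ Finset.range (n + 1),
        V k * pathSolution V c k * (U R ((n + 1 : ℕ) - 1 - k)).eval c
      = c * ∑ k ∈ Finset.range n, V k * pathSolution V c k * (U R (n - 1 - k)).eval c
        + ∑ k ∈ Finset.range (n + 1), V k * pathSolution V c k * (T R (n - k)).eval c := by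
    simp only [hU, mul_add, Finset.sum_add_distrib, Finset.mul_sum]
    rw [add_left_inj, Finset.sum_range_succ]
    simp [mul_left_comm]
  rw [pathSolution_eq_sub_sum V c (n + 1), pathSolution_eq_sub_sum V c n, hsum, Nat.cast_succ]
  ring

lemma sum_range_single_add_single_mul {p q n : ℕ} (hp : p < n) (hq : q < n) (a b : R)
    (g : ℕ → R) :
    ∑ k ∈ Finset.range n, (Pi.single p a + Pi.single q b : ℕ → R) k * g k
      = a * g p + b * g q := by
  simp [Pi.single_apply, add_mul, Finset.sum_add_distrib, hp, hq]

lemma pathSolution_single_add_single_succ_sub_mul {p q n : ℕ} (hpq : p < q) (hqn : q ≤ n)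
    (a b c : R) :
    pathSolution (Pi.single p a + Pi.single q b) c (n + 1)
        - c * pathSolution (Pi.single p a + Pi.single q b) c n
      = (T R (n + 1)).eval c - c * (T R n).eval c
        - a * (T R p).eval c * (T R (n - p)).eval c
        - b * ((T R q).eval c - a * (T R p).eval c * (U R (q - 1 - p)).eval c)
          * (T R (n - q)).eval c := by
  have hp : pathSolution (Pi.single p a + Pi.single q b) c p = (T R p).eval c :=
    pathSolution_eq_T_of_forall_lt (fun k hk => by simp [hk.ne, (hk.trans hpq).ne]) c
  have hq : pathSolution (Pi.single p a + Pi.single q b) c q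
      = (T R q).eval c - a * (T R p).eval c * (U R (q - 1 - p)).eval c := by
    rw [pathSolution_eq_sub_sum]
    simp_rw [mul_assoc]
    rw [Finset.sum_eq_single p]
    · simp [hp, hpq.ne]
    · intro k hk hkp
      simp [hkp, (Finset.mem_range.1 hk).ne]
    · simp [hpq]
  rw [pathSolution_succ_sub_mul]
  simp_rw [mul_assoc]
  rw [sum_range_single_add_single_mul (by omega) (by omega), hp, hq]
  ring

lemma forall_pathGraph_adjMatrix_mulVec_add_iff {n : ℕ} (V f : ℕ → R) (c : R) :
    (∀ i : Fin (n + 2), ((pathGraph (n + 2)).adjMatrix R *ᵥ fun j => f j) i + V i * f i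
        = c * (pathGraph (n + 2)).degree i * f i) ↔
      f 1 + V 0 * f 0 = c * f 0 ∧
      (∀ k < n, f k + f (k + 2) + V (k + 1) * f (k + 1) = 2 * c * f (k + 1)) ∧
      f n + V (n + 1) * f (n + 1) = c * f (n + 1) := by
  simp only [pathGraph_adjMatrix_mulVec_apply, degree_pathGraph (Nat.le_add_left 2 n)]
  rw [Fin.forall_fin_succ, Fin.forall_fin_succ']
  simp only [Fin.val_zero, Fin.val_succ, Fin.val_castSucc, Fin.val_last, Fin.forall_iff]
  refine and_congr (by simp) (and_congr (forall₂_congr fun k hk => ?_) (by simp))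
  simp [hk.ne, mul_comm c]

lemma eq_mul_pathSolution {n : ℕ} {V f : ℕ → R} {c : R} (hleft : f 1 + V 0 * f 0 = c * f 0)
    (hrec : ∀ k < n, f k + f (k + 2) + V (k + 1) * f (k + 1) = 2 * c * f (k + 1)) :
    ∀ k ≤ n + 1, f k = f 0 * pathSolution V c k := by
  intro k
  induction k using Nat.twoStepInduction with
  | zero => simp [pathSolution]
  | one =>
    rw [pathSolution]
    intro _
    linear_combination hleft
  | more k ih₀ ih₁ =>
    intro hk
    rw [pathSolution]
    linear_combination hrec k (by omega) + (2 * c - V (k + 1)) * ih₁ (by omega) - ih₀ (by omega)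

lemma exists_pathGraph_adjMatrix_mulVec_add_iff [IsDomain R] (n : ℕ) (V : ℕ → R) (c : R) :
    (∃ f : Fin (n + 2) → R, f ≠ 0 ∧
      ∀ i, ((pathGraph (n + 2)).adjMatrix R *ᵥ f) i + V i * f i
        = c * (pathGraph (n + 2)).degree i * f i) ↔
      pathSolution V c (n + 2) = c * pathSolution V c (n + 1) := by
  constructor
  · rintro ⟨f, hf, heq⟩
    obtain ⟨f, rfl⟩ : ∃ g : ℕ → R, f = fun j : Fin (n + 2) => g j :=
      ⟨fun k => if h : k < n + 2 then f ⟨k, h⟩ else 0, by simp⟩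
    obtain ⟨hleft, hrec, hright⟩ := (forall_pathGraph_adjMatrix_mulVec_add_iff V f c).1 heq
    have hsol := eq_mul_pathSolution hleft hrec
    have hf0 : f 0 ≠ 0 := fun h0 => hf <| funext fun j => by
      rw [hsol j (by omega), h0, zero_mul, Pi.zero_apply]
    refine mul_left_cancel₀ hf0 ?_
    rw [pathSolution]
    linear_combination V (n + 1) * hsol (n + 1) le_rfl + hsol n n.le_succ - hright
      - c * hsol (n + 1) le_rfl
  · intro hend
    refine ⟨fun j => pathSolution V c j, fun h0 => one_ne_zero (congrFun h0 0),
      (forall_pathGraph_adjMatrix_mulVec_add_iff V _ c).2 ⟨?_, fun k _ => ?_, ?_⟩⟩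
    · simp [pathSolution]
    · rw [pathSolution]
      ring
    · rw [pathSolution] at hend
      linear_combination -hend

lemma pathSolution_cosh_succ_sub_mul_eq_Ffun {L p : ℕ} (hL : p + 3 ≤ L) (x w y : ℝ)
    (hy : ((L : ℝ) - 3) * y = 2 * (p + 2) - L - 1) :
    pathSolution (Pi.single p (2 * w) + Pi.single (p + 2) (2 * w)) (Real.cosh x) L
        - Real.cosh x *
          pathSolution (Pi.single p (2 * w) + Pi.single (p + 2) (2 * w)) (Real.cosh x) (L - 1)
      = Ffun L x w y := by
  obtain ⟨n, rfl⟩ : ∃ n, L = n + 1 := ⟨L - 1, by omega⟩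
  have hU : (U ℝ ((p + 2 : ℕ) - 1 - p)).eval (Real.cosh x) = 2 * Real.cosh x := by
    rw [show ((p + 2 : ℕ) - 1 - p : ℤ) = 1 by push_cast; ring]
    simp
  rw [Nat.add_sub_cancel, pathSolution_single_add_single_succ_sub_mul (by omega) (by omega), hU,
    Ffun, mul_right_comm _ x y, hy]
  simp only [T_real_cosh]
  push_cast
  have prod_to_sum (a b : ℝ) :
      Real.cosh (a * x) * Real.cosh (b * x)
        = (Real.cosh ((a + b) * x) + Real.cosh ((a - b) * x)) / 2 := by
    rw [add_mul, sub_mul, Real.cosh_add, Real.cosh_sub]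
    ring
  have h₁ := prod_to_sum n 1
  have h₂ := prod_to_sum p (n - p)
  have h₃ := prod_to_sum (p + 2) (n - (p + 2))
  have h₄ := prod_to_sum p (n - (p + 2))
  have h₅ := prod_to_sum (n - 2) 1
  have h₆ := prod_to_sum (2 * p + 2 - n) 2
  ring_nf at h₁ h₂ h₃ h₄ h₅ h₆ ⊢
  linear_combination -h₁ - 2 * w * h₂ - 2 * w * h₃ + 8 * w ^ 2 * Real.cosh x * h₄
    + 4 * w ^ 2 * h₅ + 2 * w * h₆

end PathSolution

lemma isMaxEigenvalue_of_largest_zero {n : ℕ} {A : Matrix (Fin n) (Fin n) ℝ} {lam : ℝ}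
    (hlam : 0 < lam) {F : ℝ → ℝ}
    (heig : ∀ x, (∃ v, v ≠ 0 ∧ A *ᵥ v = (lam * (Real.cosh x - 1) / 2) • v) ↔ F x = 0)
    {x : ℝ} (hroot : F x = 0) (hmax : ∀ t, x < t → F t ≠ 0) :
    IsMaxEigenvalue A (lam * (Real.cosh x - 1) / 2) := by
  refine ⟨(heig x).2 hroot, fun μ hμ => ?_⟩
  have hx : 0 ≤ lam * (Real.cosh x - 1) / 2 := by
    have := Real.one_le_cosh x
    have : 0 ≤ Real.cosh x - 1 := by linarith
    positivity
  rcases le_total μ 0 with hneg | hpos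
  · exact hneg.trans hx
  have hone : 1 ≤ 1 + 2 * μ / lam := le_add_of_nonneg_right (by positivity)
  obtain ⟨t, ht, hcosh⟩ : ∃ t, 0 ≤ t ∧ Real.cosh t = 1 + 2 * μ / lam :=
    ⟨_, Real.arcosh_nonneg hone, Real.cosh_arcosh hone⟩
  have hμt : μ = lam * (Real.cosh t - 1) / 2 := by
    rw [hcosh]
    field_simp
    ring
  rw [hμt] at hμ ⊢
  have htx : t ≤ x := not_lt.1 fun hlt => hmax t hlt ((heig t).1 hμ)
  have := Real.cosh_strictMonoOn.monotoneOn ht (ht.trans htx) htx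
  gcongr

open SimpleGraph in
lemma exists_eigenvector_PiPh_eVec_sub_smul_PiMat_iff {L p : ℕ} (hL : 4 ≤ L) (hp : p + 3 ≤ L)
    {lam : ℝ} (hlam : lam ≠ 0) (x : ℝ) :
    (∃ v, v ≠ 0 ∧ (PiPh L (eVec L ⟨p + 1, by omega⟩) - lam • PiMat L) *ᵥ v
        = (lam * (Real.cosh x - 1) / 2) • v) ↔
      Ffun L x (1 / lam) ((2 * ((p + 2 : ℕ) : ℝ) - L - 1) / ((L : ℝ) - 3)) = 0 := by
  obtain ⟨n, rfl⟩ : ∃ n, L = n + 2 := ⟨L - 2, by omega⟩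
  have hpos := degree_pathGraph_pos (show 2 ≤ n + 2 by omega)
  have hdelta : eVec (n + 2) ⟨p + 1, by omega⟩
      = fun i : Fin (n + 2) => (Pi.single (p + 1) 1 : ℕ → ℝ) i := by
    ext i
    simp [eVec, Pi.single_apply, Fin.ext_iff]
  have hpot (i : Fin (n + 2)) : 2 / lam * ((pathGraph (n + 2)).degree i
        * ((Pi.single p 1 + Pi.single (p + 2) 1 : ℕ → ℝ) i / (pathGraph (n + 2)).degree i))
      = (Pi.single p (2 * (1 / lam)) + Pi.single (p + 2) (2 * (1 / lam)) : ℕ → ℝ) i := by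
    rw [mul_div_cancel₀ _ (by exact_mod_cast (hpos i).ne')]
    simp only [Pi.single_apply, Pi.add_apply]
    grind
  have hy : (((n + 2 : ℕ) : ℝ) - 3) * ((2 * ((p + 2 : ℕ) : ℝ) - (n + 2 : ℕ) - 1)
      / (((n + 2 : ℕ) : ℝ) - 3)) = 2 * (p + 2) - (n + 2 : ℕ) - 1 := by
    have hL' : (4 : ℝ) ≤ (n + 2 : ℕ) := by exact_mod_cast hL
    rw [mul_div_cancel₀ _ (by linarith)]
    push_cast
    ring
  rw [hdelta, PiPh_eq_diagonal (by omega), PiMat_eq_half_smul_normalizedLapMatrix (by omega),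
    exists_eigenvector_diagonal_sub_smul_normalizedLapMatrix_iff hpos hlam]
  simp only [pathGraph_adjMatrix_mulVec_single (show p + 1 < n + 2 by omega), hpot]
  rw [exists_pathGraph_adjMatrix_mulVec_add_iff,
    ← pathSolution_cosh_succ_sub_mul_eq_Ffun hp x _ _ hy, sub_eq_zero]
  rfl

theorem stmt_19_general (L : ℕ) (hL : 4 ≤ L) (lam : ℝ) (hlam : 0 < lam)
    (m₀ : ℕ) (hm₀ : 2 ≤ m₀ ∧ m₀ ≤ L - 1) (xstar : ℝ)
    (hroot : Ffun L xstar (1 / lam) ((2 * (m₀ : ℝ) - L - 1) / ((L : ℝ) - 3)) = 0)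
    (hmax : ∀ t : ℝ, xstar < t →
      Ffun L t (1 / lam) ((2 * (m₀ : ℝ) - L - 1) / ((L : ℝ) - 3)) ≠ 0) :
    IsMaxEigenvalue (PiPh L (eVec L ⟨m₀ - 1, by omega⟩) - lam • PiMat L)
      (lam * (Real.cosh xstar - 1) / 2) := by
  obtain ⟨p, rfl⟩ : ∃ p, m₀ = p + 2 := ⟨m₀ - 2, by omega⟩
  exact isMaxEigenvalue_of_largest_zero hlam
    (exists_eigenvector_PiPh_eVec_sub_smul_PiMat_iff hL (by omega) hlam.ne') hroot hmax

theorem stmt_19 (L : ℕ) (hL : 5 ≤ L) (lam : ℝ) (hlam : 0 < lam)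
    (m₀ : ℕ) (hm₀ : 3 ≤ m₀ ∧ m₀ ≤ L - 2) (xstar : ℝ)
    (hroot : Ffun L xstar (1/lam) ((2*(m₀:ℝ) - L - 1)/((L:ℝ) - 3)) = 0)
    (hmax : ∀ t : ℝ, xstar < t →
      Ffun L t (1/lam) ((2*(m₀:ℝ) - L - 1)/((L:ℝ) - 3)) ≠ 0) :
    IsMaxEigenvalue (PiPh L (eVec L ⟨m₀ - 1, by omega⟩) - lam • PiMat L)
      (lam*(Real.cosh xstar - 1)/2) := by
  exact stmt_19_general L (by omega) lam hlam m₀ (by omega) xstar hroot hmax
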